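/- Let τ_1, …, τ_s be real polynomials in the variables (w, x) ∈ ℝ^k × ℝ^N, and let φ(w, x) be a fixed Boolean combination of the s atomic predicates, each of the form τ_j(w, x) = 0 or τ_j(w, x) > 0. For each w ∈ ℝ^k let A_w = {x ∈ ℝ^N : φ(w, x) holds}, and let 𝓐 = {A_w : w ∈ ℝ^k}. Suppose B ≥ 1 is an integer such that for every v ≥ 1 with s·v ≥ k, every choice of points x_1, …, x_v ∈ ℝ^N, every r ≤ k, every choice of r polynomials θ_1, …, θ_r from among the s·v polynomials τ_j(·, x_i) : ℝ^k → ℝ, and every regular value y ∈ ℝ^r of the map f = (θ_1, …, θ_r) : ℝ^k → ℝ^r, the preimage f⁻¹(y) has at most B connected components. Then every finite subset of ℝ^N shattered by 𝓐 has cardinality at most 2·lg B + 2k·lg(2es). -/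

import Mathlib

open MvPolynomial

/-!
If `S` is shattered, the sign vectors of the polynomials `τ_j(·, x)`, `x ∈ S`, take at least
`2 ^ |S|` values on the parameter space. Replacing each equation `p = 0` by the two equations
`p = y` with generic small `y < 0` and `y > 0`, distinct sign vectors come from distinct components
of the complement of a union of hypersurfaces, and by an algebraic form of Sard's theorem the
hypersurfaces may be taken smooth and transversal. Warren's argument bounds the number of these
components: removing the hypersurfaces one at a time, each removal creates at most as many new
components as the hypersurface has inside the current set, so that the total is at most the sum of
the numbers of components of all intersections of the hypersurfaces. At most `k` of them meet, and
never both of `p = y`, `p = y'`, whence `2 ^ |S| ≤ B * 2 ^ k * ∑ r ≤ k, (s |S|).choose r`, and the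
bound follows by taking logarithms.
-/

section JacobianAlgebra

open KaehlerDifferential TensorProduct Matrix

variable {σ ι : Type*}

/-- The polynomial map `A^σ → A^ι` with components `P i`. The point may lie in any algebra over the
coefficient ring, so that a set of points can be treated as one point over its ring of functions. -/
noncomputable def polyMap {R A : Type*} [CommRing R] [CommRing A] [Algebra R A]
    (P : ι → MvPolynomial σ R) (x : σ → A) : ι → A :=
  fun i => aeval x (P i)

/-- The Jacobian matrix of `polyMap P` at `x`, whose `i`-th row is the gradient of `P i`. -/
noncomputable def polyJacobian {R A : Type*} [CommRing R] [CommRing A] [Algebra R A]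
    (P : ι → MvPolynomial σ R) (x : σ → A) : Matrix ι σ A :=
  Matrix.of fun i j => aeval x (pderiv j (P i))

theorem polyMap_comp {R A A' : Type*} [CommRing R] [CommRing A] [Algebra R A] [CommRing A']
    [Algebra R A'] (f : A →ₐ[R] A') (P : ι → MvPolynomial σ R) (x : σ → A) :
    polyMap P (f ∘ x) = f ∘ polyMap P x :=
  funext fun i => (comp_aeval_apply x f (P i)).symm

theorem polyJacobian_comp {R A A' : Type*} [CommRing R] [CommRing A] [Algebra R A] [CommRing A']
    [Algebra R A'] (f : A →ₐ[R] A') (P : ι → MvPolynomial σ R) (x : σ → A) :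
    polyJacobian P (f ∘ x) = (polyJacobian P x).map f :=
  Matrix.ext fun i j => (comp_aeval_apply x f (pderiv j (P i))).symm

theorem derivation_polyMap [Fintype σ] {R A M : Type*} [CommRing R] [CommRing A] [Algebra R A]
    [AddCommGroup M] [Module A M] [Module R M] [IsScalarTower R A M]
    (d : Derivation R A M) (P : ι → MvPolynomial σ R) (x : σ → A) (i : ι) :
    d (polyMap P x i) = ∑ j, polyJacobian P x i j • d (x j) := by
  classical
  suffices ∀ p : MvPolynomial σ R, d (aeval x p) = ∑ j, aeval x (pderiv j p) • d (x j) from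
    this (P i)
  intro p
  induction p using MvPolynomial.induction_on with
  | C a => simp
  | add p q hp hq => simp [hp, hq, add_smul, Finset.sum_add_distrib]
  | mul_X p i hp =>
    simp only [map_mul, aeval_X, Derivation.leibniz, hp, pderiv_X, smul_eq_mul, map_add, add_smul,
      Finset.sum_add_distrib, Finset.smul_sum, mul_smul]
    congr 1
    rw [Finset.sum_eq_single_of_mem i (Finset.mem_univ i) fun j _ hj => by simp [hj.symm]]
    simp

section CharZero

variable {𝕜 K : Type*} [Field 𝕜] [CharZero 𝕜] [Field K] [Algebra 𝕜 K]

theorem formallyEtale_of_isTranscendenceBasis [Algebra (MvPolynomial ι 𝕜) K]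
    [IsScalarTower 𝕜 (MvPolynomial ι 𝕜) K]
    (h : IsTranscendenceBasis 𝕜 fun i => algebraMap (MvPolynomial ι 𝕜) K (X i)) :
    Algebra.FormallyEtale (MvPolynomial ι 𝕜) K := by
  have algebraMap_eq (p : MvPolynomial ι 𝕜) :
      algebraMap _ K p = aeval (fun i => algebraMap (MvPolynomial ι 𝕜) K (X i)) p :=
    congr($(aeval_unique (IsScalarTower.toAlgHom 𝕜 (MvPolynomial ι 𝕜) K)) p)
  have : FaithfulSMul (MvPolynomial ι 𝕜) K := by
    rw [faithfulSMul_iff_algebraMap_injective, funext algebraMap_eq]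
    exact h.1
  let : Algebra (FractionRing (MvPolynomial ι 𝕜)) K := FractionRing.liftAlgebra _ _
  have : IsScalarTower (MvPolynomial ι 𝕜) (FractionRing (MvPolynomial ι 𝕜)) K :=
    FractionRing.isScalarTower_liftAlgebra _ _
  have : Algebra.IsAlgebraic (MvPolynomial ι 𝕜) K := by
    have := h.isAlgebraic
    let e := h.1.aevalEquiv
    refine .of_ringHom_of_comp_eq (RingHomClass.toRingHom e) (RingHom.id K) e.surjective
      Function.injective_id ?_
    ext a
    · simpa [e] using IsScalarTower.algebraMap_apply 𝕜 (MvPolynomial ι 𝕜) K a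
    · simp [e]
  have : Algebra.IsAlgebraic (FractionRing (MvPolynomial ι 𝕜)) K :=
    (IsFractionRing.comap_isAlgebraic_iff (A := MvPolynomial ι 𝕜)).1 this
  have : Algebra.FormallyEtale (FractionRing (MvPolynomial ι 𝕜)) K := .of_isSeparable _ _
  have : Algebra.FormallyEtale (MvPolynomial ι 𝕜) (FractionRing (MvPolynomial ι 𝕜)) :=
    .of_isLocalization (nonZeroDivisors _)
  exact .comp _ (FractionRing (MvPolynomial ι 𝕜)) _

theorem linearIndependent_D_of_isTranscendenceBasis {b : ι → K} (hb : IsTranscendenceBasis 𝕜 b) :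
    LinearIndependent K fun i => D 𝕜 K (b i) := by
  let : Algebra (MvPolynomial ι 𝕜) K := (aeval (R := 𝕜) b).toAlgebra
  have : IsScalarTower 𝕜 (MvPolynomial ι 𝕜) K := .of_algebraMap_eq' (aeval b).comp_algebraMap.symm
  have algebraMap_X (i : ι) : algebraMap (MvPolynomial ι 𝕜) K (X i) = b i := aeval_X b i
  have : Algebra.FormallyEtale (MvPolynomial ι 𝕜) K :=
    formallyEtale_of_isTranscendenceBasis <| by simpa only [algebraMap_X] using hb
  let e := tensorKaehlerEquivOfFormallyEtale 𝕜 (MvPolynomial ι 𝕜) K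
  let dX := ((mvPolynomialBasis 𝕜 ι).baseChange K).map e
  suffices (fun i => D 𝕜 K (b i)) = dX from this ▸ dX.linearIndependent
  ext i
  have hi := tensorKaehlerEquivOfFormallyEtale_symm_D_algebraMap 𝕜 (MvPolynomial ι 𝕜) K (X i)
  rw [LinearEquiv.symm_apply_eq, algebraMap_X] at hi
  simp [hi, dX, e]

theorem linearIndependent_D_of_algebraicIndependent {b : ι → K} (hb : AlgebraicIndependent 𝕜 b) :
    LinearIndependent K fun i => D 𝕜 K (b i) := by
  obtain ⟨t, ht, htb⟩ := exists_isTranscendenceBasis_superset hb.coe_range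
  exact (linearIndependent_D_of_isTranscendenceBasis htb).comp (fun i => ⟨b i, ht ⟨i, rfl⟩⟩)
    fun i j hij => hb.injective congr(Subtype.val $hij)

theorem linearIndependent_jacobian_of_algebraicIndependent [Finite σ]
    {P : ι → MvPolynomial σ 𝕜} {x : σ → K} (h : AlgebraicIndependent 𝕜 (polyMap P x)) :
    LinearIndependent K (polyJacobian P x).row := by
  cases nonempty_fintype σ
  refine .of_comp (Fintype.linearCombination K fun j => D 𝕜 K (x j)) ?_
  convert linearIndependent_D_of_algebraicIndependent h using 2 with i
  rw [derivation_polyMap]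
  rfl

theorem exists_aeval_polyMap_eq_zero [Finite σ] [Fintype ι] {A : Type*} [CommRing A] [Algebra 𝕜 A]
    (P : ι → MvPolynomial σ 𝕜) (x : σ → A) (l : ι → A) (hl : l ᵥ* polyJacobian P x = 0)
    (hspan : Ideal.span (Set.range l) = ⊤) :
    ∃ q : MvPolynomial ι 𝕜, q ≠ 0 ∧ aeval (polyMap P x) q = 0 := by
  by_contra! h
  let S : Submonoid A := (nonZeroDivisors (MvPolynomial ι 𝕜)).map (aeval (polyMap P x))
  have disjoint_bot : Disjoint ((⊥ : Ideal A) : Set A) S := by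
    rw [Set.disjoint_left]
    rintro _ rfl ⟨q, hq, hq0⟩
    exact h q (nonZeroDivisors.ne_zero hq) hq0
  obtain ⟨p, hp, -, hpS⟩ := Ideal.exists_le_prime_disjoint ⊥ S disjoint_bot
  let f : A →ₐ[𝕜] p.ResidueField := IsScalarTower.toAlgHom 𝕜 A p.ResidueField
  have hf (a : A) : f a = 0 ↔ a ∈ p := Ideal.algebraMap_residueField_eq_zero
  have algebraicIndependent : AlgebraicIndependent 𝕜 (polyMap P (f ∘ x)) := by
    refine algebraicIndependent_iff.2 fun q hq => of_not_not fun hq0 => ?_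
    rw [polyMap_comp, Function.comp_def, ← comp_aeval_apply, hf] at hq
    exact Set.disjoint_left.1 hpS hq ⟨q, mem_nonZeroDivisors_of_ne_zero hq0, rfl⟩
  have fl_eq_zero : f ∘ l = 0 := by
    have independent := linearIndependent_jacobian_of_algebraicIndependent algebraicIndependent
    refine Matrix.vecMul_injective_iff.2 independent (funext fun i => ?_)
    have := (f : A →+* p.ResidueField).map_vecMul (polyJacobian P x) l i
    simpa [hl, polyJacobian_comp] using this.symm
  refine hp.ne_top (top_le_iff.1 (hspan ▸ Ideal.span_le.2 ?_))
  rintro _ ⟨i, rfl⟩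
  exact (hf _).1 congr($fl_eq_zero i)

/-- Algebraic form of Sard's theorem. -/
theorem exists_ne_zero_vanishing_on_criticalValues [Finite σ] [Finite ι]
    (P : ι → MvPolynomial σ 𝕜) :
    ∃ q : MvPolynomial ι 𝕜, q ≠ 0 ∧
      ∀ x : σ → 𝕜, ¬ LinearIndependent 𝕜 (polyJacobian P x).row → eval (polyMap P x) q = 0 := by
  classical
  cases nonempty_fintype ι
  -- The tautological critical point, with coordinates in the ring of functions on the critical set.
  let Z := {x : σ → 𝕜 // ¬ LinearIndependent 𝕜 (polyJacobian P x).row}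
  let x : σ → Z → 𝕜 := fun j z => z.1 j
  have aeval_apply (p : MvPolynomial σ 𝕜) (z : Z) : aeval x p z = aeval z.1 p :=
    comp_aeval_apply x (Pi.evalAlgHom 𝕜 (fun _ => 𝕜) z) p
  choose l hl i hi using fun z : Z => Fintype.not_linearIndependent_iff.1 z.2
  have relation : (fun a z => l z a) ᵥ* polyJacobian P x = 0 := by
    ext j z
    simpa [vecMul, dotProduct, polyJacobian, aeval_apply] using congr($(hl z) j)
  have span_eq_top : Ideal.span (Set.range fun a z => l z a) = ⊤ := by
    refine (Ideal.eq_top_iff_one _).2 ?_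
    have one_eq : (1 : Z → 𝕜) =
        ∑ a, (fun z => if i z = a then (l z a)⁻¹ else 0) * fun z => l z a := by
      ext z
      simp [hi]
    rw [one_eq]
    exact sum_mem fun a _ => Ideal.mul_mem_left _ _ (Ideal.subset_span ⟨a, rfl⟩)
  obtain ⟨q, hq0, hq⟩ := exists_aeval_polyMap_eq_zero P x _ relation span_eq_top
  refine ⟨q, hq0, fun z hz => ?_⟩
  let ev := Pi.evalAlgHom 𝕜 (fun _ : Z => 𝕜) ⟨z, hz⟩
  calc eval (polyMap P z) q = aeval (ev ∘ polyMap P x) q := by rw [← polyMap_comp]; rfl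
    _ = ev (aeval (polyMap P x) q) := (comp_aeval_apply _ ev q).symm
    _ = 0 := by rw [hq, map_zero]

end CharZero

theorem formallyUnramified_of_jacobian [Fintype σ] [DecidableEq σ] {R A : Type*} [CommRing R]
    [CommRing A] [Algebra R A] {P : σ → MvPolynomial σ R} {x : σ → A} {y : σ → R} {u : A}
    (hx : polyMap P x = algebraMap R A ∘ y) (hu : u * (polyJacobian P x).det = 1)
    (hgen : Algebra.adjoin R (insert u (Set.range x)) = ⊤) :
    Algebra.FormallyUnramified R A := by
  set J := polyJacobian P x with hJ
  have D_x (j : σ) : D R A (x j) = 0 := by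
    have J_D (i : σ) : ∑ k, J i k • D R A (x k) = 0 := by
      rw [← derivation_polyMap, hx, Function.comp_apply, Derivation.map_algebraMap]
    calc D R A (x j) = ∑ k, ((u • J.adjugate) * J) j k • D R A (x k) := by
          simp [adjugate_mul, hu, one_apply, ite_smul]
      _ = ∑ i, (u • J.adjugate) j i • ∑ k, J i k • D R A (x k) := by
          simp only [mul_apply, Finset.sum_smul, Finset.smul_sum, mul_smul]
          exact Finset.sum_comm
      _ = 0 := by simp [J_D]
  have D_det : D R A J.det = 0 := by
    let detJ : Unit → MvPolynomial σ R := fun _ => (polyJacobian P X).det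
    have : J.det = polyMap detJ x () := by
      simp only [polyMap, detJ, AlgHom.map_det]
      congr 1
      ext i j
      simp [hJ, polyJacobian]
    simp [this, derivation_polyMap, D_x]
  have D_u : D R A u = 0 := by
    have : J.det • D R A u = 0 := by simpa [D_det] using congr(D R A $hu)
    rw [← one_smul A (D R A u), ← hu, mul_smul, this, smul_zero]
  have D_eq_zero : D R A = 0 := by
    refine Derivation.ext_of_adjoin_eq_top _ hgen ?_
    rintro _ (rfl | ⟨j, rfl⟩)
    exacts [D_u, D_x j]
  refine ⟨Submodule.subsingleton_iff A |>.1 <| subsingleton_of_bot_eq_top ?_⟩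
  simp [← span_range_derivation, D_eq_zero]

theorem finite_nondegenerate_fiber [Finite σ] {𝕜 : Type*} [Field 𝕜] (P : σ → MvPolynomial σ 𝕜)
    (y : σ → 𝕜) :
    {x : σ → 𝕜 | polyMap P x = y ∧ LinearIndependent 𝕜 (polyJacobian P x).row}.Finite := by
  classical
  cases nonempty_fintype σ
  set Z := {x : σ → 𝕜 | polyMap P x = y ∧ LinearIndependent 𝕜 (polyJacobian P x).row}
  let u : Z → 𝕜 := fun z => (polyJacobian P z.1).det⁻¹
  let x : σ → Z → 𝕜 := fun j z => z.1 j
  let A := Algebra.adjoin 𝕜 (insert u (Set.range x))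
  let u' : A := ⟨u, Algebra.subset_adjoin (Set.mem_insert _ _)⟩
  let x' : σ → A := fun j => ⟨x j, Algebra.subset_adjoin (Set.mem_insert_of_mem _ ⟨j, rfl⟩)⟩
  let ev (z : Z) : A →ₐ[𝕜] 𝕜 := (Pi.evalAlgHom 𝕜 (fun _ => 𝕜) z).comp A.val
  have ev_comp (z : Z) : ev z ∘ x' = z.1 := rfl
  have ext_ev {a b : A} (h : ∀ z, ev z a = ev z b) : a = b := Subtype.ext (funext h)
  have : Algebra.FormallyUnramified 𝕜 A := by
    refine formallyUnramified_of_jacobian (P := P) (x := x') (y := y) (u := u') ?_ ?_ ?_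
    · refine funext fun i => ext_ev fun z => ?_
      have := congr($(polyMap_comp (ev z) P x') i)
      rw [ev_comp, z.2.1] at this
      simpa using this.symm
    · refine ext_ev fun z => ?_
      rw [map_mul, AlgHom.map_det, AlgHom.mapMatrix_apply, ← polyJacobian_comp, ev_comp, map_one]
      refine inv_mul_cancel₀ ?_
      exact ((isUnit_iff_isUnit_det _).1 (linearIndependent_rows_iff_isUnit.1 z.2.2)).ne_zero
    · rw [← Algebra.adjoin_adjoin_coe_preimage]
      congr 1
      ext a
      simp [u', x', Subtype.ext_iff]
  have : Algebra.FiniteType 𝕜 A := (Subalgebra.fg_iff_finiteType _).1 <|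
    Subalgebra.fg_def.2 ⟨_, (Set.finite_range x).insert u, rfl⟩
  have : Module.Finite 𝕜 A := Algebra.FormallyUnramified.finite_of_free 𝕜 A
  exact Finite.of_injective ev fun z w h => Subtype.ext <| by rw [← ev_comp z, h, ev_comp]

end JacobianAlgebra

section Submersion

open Filter Topology

theorem isPreconnected_preimage_subtypeVal {X : Type*} [TopologicalSpace X] {S W : Set X} :
    IsPreconnected (Subtype.val ⁻¹' W : Set S) ↔ IsPreconnected (S ∩ W) := by
  rw [← IsInducing.subtypeVal.isPreconnected_image, Subtype.image_preimage_coe]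

variable {E F : Type*} [NormedAddCommGroup E] [NormedSpace ℝ E] [NormedAddCommGroup F]
  [NormedSpace ℝ F]

/-- `f` is strictly differentiable at `x` with surjective derivative: the hypothesis of the implicit
function theorem. -/
def StrictSubmersionAt (f : E → F) (x : E) : Prop :=
  ∃ f' : E →L[ℝ] F, HasStrictFDerivAt f f' x ∧ f'.range = ⊤

namespace StrictSubmersionAt

variable {f : E → F} {x : E}

theorem surjective_fderiv (hf : StrictSubmersionAt f x) : Function.Surjective (fderiv ℝ f x) := by
  obtain ⟨f', hf', hrange⟩ := hf
  rw [hf'.hasFDerivAt.fderiv]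
  exact LinearMap.range_eq_top.1 hrange

theorem mem_closure_preimage [CompleteSpace E] [CompleteSpace F] (hf : StrictSubmersionAt f x)
    {C : Set F} (hx : f x ∈ closure C) : x ∈ closure (f ⁻¹' C) := by
  obtain ⟨f', hf', hrange⟩ := hf
  rw [mem_closure_iff_frequently, ← hf'.map_nhds_eq_of_surj hrange, frequently_map] at hx
  exact mem_closure_iff_frequently.2 hx

/-- The neighbourhood is a product box in the coordinates straightening `f`, so that a convex
constraint on the values of `f` cuts out a convex set in these coordinates. -/
theorem exists_isPreconnected_inter_preimage [CompleteSpace E] [FiniteDimensional ℝ F]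
    (hf : StrictSubmersionAt f x) {O : Set E} (hO : O ∈ 𝓝 x) :
    ∃ W ∈ 𝓝 x, W ⊆ O ∧ ∀ C : Set F, Convex ℝ C → IsPreconnected (W ∩ f ⁻¹' C) := by
  obtain ⟨f', hf', hrange⟩ := hf
  let Φ := hf'.implicitToOpenPartialHomeomorph f f' hrange
  have Φ_fst (w : E) : (Φ w).1 = f w := rfl
  have x_mem : x ∈ Φ.source := hf'.mem_implicitToOpenPartialHomeomorph_source hrange
  have Φx_mem : Φ x ∈ Φ.target := Φ.map_source x_mem
  obtain ⟨ε, hε, ball_subset⟩ : ∃ ε > 0, Metric.ball (Φ x) ε ⊆ Φ.target ∩ Φ.symm ⁻¹' O :=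
    Metric.mem_nhds_iff.1 <| inter_mem (Φ.open_target.mem_nhds Φx_mem) <|
      Φ.symm.continuousAt Φx_mem <| by rwa [Φ.left_inv x_mem]
  refine ⟨Φ.source ∩ Φ ⁻¹' Metric.ball (Φ x) ε, ?_, ?_, fun C hC => ?_⟩
  · exact inter_mem (Φ.open_source.mem_nhds x_mem)
      (Φ.continuousAt x_mem (Metric.ball_mem_nhds _ hε))
  · rintro w ⟨hw, hwε⟩
    simpa only [Set.mem_preimage, Φ.left_inv hw] using (ball_subset hwε).2
  · have straightened : (Φ.source ∩ Φ ⁻¹' Metric.ball (Φ x) ε) ∩ f ⁻¹' C =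
        Φ.symm '' (Metric.ball (Φ x) ε ∩ C ×ˢ Set.univ) := by
      ext w
      constructor
      · rintro ⟨⟨hw, hwε⟩, hwC⟩
        exact ⟨Φ w, ⟨hwε, hwC, trivial⟩, Φ.left_inv hw⟩
      · rintro ⟨v, ⟨hvε, hvC, -⟩, rfl⟩
        have hv := (ball_subset hvε).1
        rw [Set.mem_inter_iff, Set.mem_inter_iff, Set.mem_preimage, Set.mem_preimage, ← Φ_fst,
          Φ.right_inv hv]
        exact ⟨⟨Φ.map_target hv, hvε⟩, hvC⟩
    rw [straightened]
    exact ((convex_ball _ _).inter (hC.prod convex_univ)).isPreconnected.image _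
      (Φ.continuousOn_symm.mono fun v hv => (ball_subset hv.1).1)

theorem locallyConnectedSpace_fiber [CompleteSpace E] [FiniteDimensional ℝ F] {y : F}
    (hf : ∀ x, f x = y → StrictSubmersionAt f x) : LocallyConnectedSpace (f ⁻¹' {y}) := by
  refine locallyConnectedSpace_iff_connected_subsets.2 fun x U hU => ?_
  obtain ⟨O, hO, hOU⟩ := (nhds_subtype _ x ▸ mem_comap).1 hU
  obtain ⟨W, hW, hWO, hWC⟩ := (hf x x.2).exists_isPreconnected_inter_preimage hO
  refine ⟨Subtype.val ⁻¹' W, continuousAt_subtype_val hW, ?_, (Set.preimage_mono hWO).trans hOU⟩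
  exact isPreconnected_preimage_subtypeVal.2 (Set.inter_comm _ _ ▸ hWC {y} (convex_singleton y))

end StrictSubmersionAt

end Submersion

section PolynomialMaps

variable {σ ι : Type*}

theorem hasStrictFDerivAt_eval [Fintype σ] (p : MvPolynomial σ ℝ) (x : σ → ℝ) :
    HasStrictFDerivAt (fun w => eval w p)
      (∑ j, eval x (pderiv j p) • ContinuousLinearMap.proj (R := ℝ) (φ := fun _ : σ => ℝ) j) x := by
  classical
  induction p using MvPolynomial.induction_on with
  | C a => simpa using hasStrictFDerivAt_const (𝕜 := ℝ) a x
  | add p q hp hq =>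
    simpa only [map_add, add_smul, Finset.sum_add_distrib] using hp.fun_add hq
  | mul_X p i hp =>
    simp only [map_mul, eval_X]
    refine (hp.mul (hasStrictFDerivAt_apply (𝕜 := ℝ) (F' := fun _ : σ => ℝ) i x)).congr_fderiv ?_
    simp only [Derivation.leibniz, pderiv_X, smul_eq_mul, map_add, map_mul, eval_X, add_smul,
      Finset.sum_add_distrib, mul_smul, Finset.smul_sum]
    congr 1
    rw [Finset.sum_eq_single_of_mem i (Finset.mem_univ i) fun j _ hj => by simp [hj.symm]]
    simp

theorem strictSubmersionAt_polyMap [Fintype σ] [Fintype ι] {P : ι → MvPolynomial σ ℝ} {x : σ → ℝ}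
    (h : LinearIndependent ℝ (polyJacobian P x).row) : StrictSubmersionAt (polyMap P) x := by
  refine ⟨(polyJacobian P x).mulVecLin.toContinuousLinearMap, ?_, ?_⟩
  · refine hasStrictFDerivAt_pi'.2 fun i => (hasStrictFDerivAt_eval (P i) x).congr_fderiv ?_
    ext v
    simp [Matrix.mulVec, dotProduct, polyJacobian]
  · have : Module.finrank ℝ (polyJacobian P x).mulVecLin.range = Module.finrank ℝ (ι → ℝ) := by
      rw [← Matrix.rank, h.rank_matrix, Module.finrank_fintype_fun_eq_card]
    exact Submodule.eq_top_of_finrank_eq this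

theorem continuous_polyMap (P : ι → MvPolynomial σ ℝ) :
    Continuous (polyMap P : (σ → ℝ) → ι → ℝ) :=
  continuous_pi fun i => MvPolynomial.continuous_eval (P i)

end PolynomialMaps

section FiniteComponents

open Filter Topology Matrix

theorem exists_mem_connectedComponent_isLocalMinOn {X : Type*} [TopologicalSpace X] {Z : Set X}
    [LocallyConnectedSpace Z] (hZ : IsClosed Z) {g : X → ℝ} (hg : Continuous g)
    (hg_top : Tendsto g (cocompact X) atTop) (z : Z) :
    ∃ x ∈ connectedComponent z, IsLocalMinOn g Z x := by
  have : Tendsto (g ∘ Subtype.val) (cocompact Z) atTop :=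
    hg_top.comp hZ.isClosedEmbedding_subtypeVal.tendsto_cocompact
  obtain ⟨x, hx, hmin⟩ := (hg.comp continuous_subtype_val).continuousOn.exists_isMinOn'
    isClosed_connectedComponent mem_connectedComponent
    ((this.eventually_ge_atTop (g z)).filter_mono inf_le_left)
  refine ⟨x, hx, ?_⟩
  have hnhds : connectedComponent z ∈ 𝓝 x := isOpen_connectedComponent.mem_nhds hx
  rw [IsLocalMinOn, IsMinFilter, nhdsWithin_eq_map_subtype_coe x.2, eventually_map]
  exact mem_of_superset hnhds hmin

variable {σ ι : Type*}

/-- Solutions `(x, l)` of `polyMap (lagrangeSystem P) (x, l) = (a, y)` are the critical points `x`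
of the squared distance to `a` on the fibre of `P` over `y`, with multipliers `l`. -/
noncomputable def lagrangeSystem {R : Type*} [CommRing R] [Fintype ι] (P : ι → MvPolynomial σ R) :
    σ ⊕ ι → MvPolynomial (σ ⊕ ι) R :=
  Sum.elim (fun j => X (Sum.inl j) + ∑ i, X (Sum.inr i) * rename Sum.inl (pderiv j (P i)))
    (fun i => rename Sum.inl (P i))

theorem polyMap_lagrangeSystem {R : Type*} [CommRing R] [Fintype ι] (P : ι → MvPolynomial σ R)
    (x : σ → R) (l : ι → R) :
    polyMap (lagrangeSystem P) (Sum.elim x l) =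
      Sum.elim (x + l ᵥ* polyJacobian P x) (polyMap P x) := by
  ext (j | i) <;>
  simp [polyMap, lagrangeSystem, aeval_eq_eval, eval_rename, vecMul, dotProduct, polyJacobian]

theorem tendsto_sum_sq_sub_cocompact [Fintype σ] (a : σ → ℝ) :
    Tendsto (fun x : σ → ℝ => ∑ j, (x j - a j) ^ 2) (cocompact (σ → ℝ)) atTop := by
  refine tendsto_atTop_mono (fun x => ?_) <|
    (tendsto_pow_atTop two_ne_zero).comp (tendsto_dist_right_cocompact_atTop a)
  rw [Function.comp_apply, ← Real.le_sqrt dist_nonneg (Finset.sum_nonneg fun _ _ => sq_nonneg _),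
    dist_pi_le_iff (Real.sqrt_nonneg _)]
  intro j
  exact Real.abs_le_sqrt <| Finset.single_le_sum (f := fun j => (x j - a j) ^ 2)
    (fun _ _ => sq_nonneg _) (Finset.mem_univ j)

theorem exists_multipliers_of_isLocalMinOn [Fintype σ] [Fintype ι] {P : ι → MvPolynomial σ ℝ}
    {a x : σ → ℝ}
    (hx : LinearIndependent ℝ (polyJacobian P x).row)
    (hmin : IsLocalMinOn (fun w : σ → ℝ => ∑ j, (w j - a j) ^ 2) (polyMap P ⁻¹' {polyMap P x}) x) :
    ∃ l : ι → ℝ, x + l ᵥ* polyJacobian P x = a := by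
  classical
  let d : MvPolynomial σ ℝ := ∑ j, (X j - C (a j)) ^ 2
  have eval_d : (fun w => eval w d) = fun w : σ → ℝ => ∑ j, (w j - a j) ^ 2 := by ext; simp [d]
  have pderiv_d (j : σ) : eval x (pderiv j d) = 2 * (x j - a j) := by
    simp [d, Derivation.leibniz_pow, pderiv_X, Pi.single_apply]
  have fiber_eq : polyMap P ⁻¹' {polyMap P x} = {w | ∀ i, eval w (P i) = eval x (P i)} := by
    ext w; simp [funext_iff, polyMap, aeval_eq_eval]
  rw [← eval_d, fiber_eq] at hmin
  obtain ⟨l, c, hne, hsum⟩ := IsLocalExtrOn.exists_multipliers_of_hasStrictFDerivAt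
    (f := fun i w => eval w (P i)) (.inl hmin) (fun i => hasStrictFDerivAt_eval (P i) x)
    (hasStrictFDerivAt_eval d x)
  have hl : l ᵥ* polyJacobian P x = (2 * c) • (a - x) := by
    ext j
    have := congr($hsum (Pi.single j 1))
    simp only [pderiv_d, _root_.add_apply, _root_.sum_apply, _root_.smul_apply,
      ContinuousLinearMap.proj_apply, Pi.single_apply, smul_eq_mul, mul_ite, mul_one, mul_zero,
      Finset.sum_ite_eq', Finset.mem_univ, ↓reduceIte, _root_.zero_apply] at this
    simp only [vecMul, dotProduct, polyJacobian, aeval_eq_eval, of_apply, Pi.smul_apply,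
      Pi.sub_apply, smul_eq_mul]
    linarith
  have hc : 2 * c ≠ 0 := by
    rintro hc
    rw [hc, zero_smul] at hl
    have l_eq_zero : l = 0 := vecMul_injective_iff.2 hx (hl.trans (zero_vecMul _).symm)
    exact hne (by simpa [l_eq_zero] using hc)
  refine ⟨(2 * c)⁻¹ • l, ?_⟩
  rw [smul_vecMul, hl, inv_smul_smul₀ hc, add_sub_cancel]

theorem exists_mem_connectedComponent_lagrangeSystem [Finite σ] [Fintype ι]
    {P : ι → MvPolynomial σ ℝ} {y : ι → ℝ}
    (hreg : ∀ x : σ → ℝ, polyMap P x = y → LinearIndependent ℝ (polyJacobian P x).row) (a : σ → ℝ)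
    (z : (polyMap P ⁻¹' {y} : Set (σ → ℝ))) :
    ∃ x ∈ connectedComponent z, ∃ l : ι → ℝ,
      polyMap (lagrangeSystem P) (Sum.elim x.1 l) = Sum.elim a y := by
  cases nonempty_fintype σ
  have := StrictSubmersionAt.locallyConnectedSpace_fiber
    fun x hx => strictSubmersionAt_polyMap (hreg x hx)
  have hclosed : IsClosed (polyMap P ⁻¹' {y}) := isClosed_singleton.preimage (continuous_polyMap P)
  obtain ⟨⟨x, rfl⟩, hxz, hmin⟩ := exists_mem_connectedComponent_isLocalMinOn hclosed (by fun_prop)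
    (tendsto_sum_sq_sub_cocompact a) z
  obtain ⟨l, hl⟩ := exists_multipliers_of_isLocalMinOn (hreg x rfl) hmin
  exact ⟨_, hxz, l, by rw [polyMap_lagrangeSystem, hl]⟩

theorem finite_connectedComponents_fiber [Finite σ] [Fintype ι] {P : ι → MvPolynomial σ ℝ}
    {a : σ → ℝ} {y : ι → ℝ}
    (hreg : ∀ x : σ → ℝ, polyMap P x = y → LinearIndependent ℝ (polyJacobian P x).row)
    (hlagrange : ∀ v : σ ⊕ ι → ℝ, polyMap (lagrangeSystem P) v = Sum.elim a y →
      LinearIndependent ℝ (polyJacobian (lagrangeSystem P) v).row) :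
    Finite (ConnectedComponents (polyMap P ⁻¹' {y} : Set (σ → ℝ))) := by
  let L := {v : σ ⊕ ι → ℝ // polyMap (lagrangeSystem P) v = Sum.elim a y}
  have : Finite L := (finite_nondegenerate_fiber (lagrangeSystem P) (Sum.elim a y)).subset
    fun v hv => ⟨hv, hlagrange v hv⟩
  have mem_fiber (v : L) : polyMap P (v.1 ∘ Sum.inl) = y := by
    have := v.2
    rw [← Sum.elim_comp_inl_inr v.1, polyMap_lagrangeSystem] at this
    exact funext fun i => congr($this (Sum.inr i))
  refine Finite.of_surjective (fun v : L => ((⟨v.1 ∘ Sum.inl, mem_fiber v⟩ :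
    (polyMap P ⁻¹' {y} : Set (σ → ℝ))) : ConnectedComponents _)) fun c => ?_
  obtain ⟨z, rfl⟩ := ConnectedComponents.surjective_coe c
  obtain ⟨x, hxz, l, hl⟩ := exists_mem_connectedComponent_lagrangeSystem hreg a z
  exact ⟨⟨_, hl⟩, ConnectedComponents.coe_eq_coe'.2 hxz⟩

/-- The equation `q (a, y) = 0` covers the critical values `y` of `P` and the critical values
`(a, y)` of its Lagrange system. -/
theorem exists_ne_zero_forall_regular_and_finite_components [Fintype σ] [Fintype ι]
    (P : ι → MvPolynomial σ ℝ) :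
    ∃ q : MvPolynomial (σ ⊕ ι) ℝ, q ≠ 0 ∧ ∀ (a : σ → ℝ) (y : ι → ℝ), eval (Sum.elim a y) q ≠ 0 →
      (∀ x : σ → ℝ, polyMap P x = y → StrictSubmersionAt (polyMap P) x) ∧
        Finite (ConnectedComponents (polyMap P ⁻¹' {y} : Set (σ → ℝ))) := by
  obtain ⟨q₁, hq₁, hcrit₁⟩ := exists_ne_zero_vanishing_on_criticalValues P
  obtain ⟨q₂, hq₂, hcrit₂⟩ := exists_ne_zero_vanishing_on_criticalValues (lagrangeSystem P)
  refine ⟨rename Sum.inr q₁ * q₂,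
    mul_ne_zero ((map_ne_zero_iff _ (rename_injective _ Sum.inr_injective)).2 hq₁) hq₂,
    fun a y hay => ?_⟩
  rw [map_mul, eval_rename, Sum.elim_comp_inr] at hay
  have hreg (x : σ → ℝ) (hx : polyMap P x = y) : LinearIndependent ℝ (polyJacobian P x).row :=
    of_not_not fun h => left_ne_zero_of_mul hay (hx ▸ hcrit₁ x h)
  refine ⟨fun x hx => strictSubmersionAt_polyMap (hreg x hx),
    finite_connectedComponents_fiber hreg (a := a) fun v hv => of_not_not fun h => ?_⟩
  exact right_ne_zero_of_mul hay (hv ▸ hcrit₂ v h)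

end FiniteComponents

section LocallyConstantFunctions

open Filter Topology

variable {X : Type*} [TopologicalSpace X]

/-- Every point of `M` is a limit of points of `S`, and nearby `S` consists of a single piece, so
that a locally constant function on `S` has a well-defined limit at each point of `M`. -/
def UnibranchAlong (S M : Set X) : Prop :=
  ∀ p ∈ M, p ∈ closure S ∧ ∃ W ∈ 𝓝 p, IsPreconnected (S ∩ W)

namespace UnibranchAlong

variable {S M : Set X}

theorem comap_neBot (h : UnibranchAlong S M) (p : M) :
    NeBot (comap (Subtype.val : S → X) (𝓝 p.1)) :=
  mem_closure_iff_comap_neBot.1 (h p p.2).1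

theorem exists_eventually_eq {Y : Type*} (h : UnibranchAlong S M) (f : LocallyConstant S Y)
    (p : M) : ∃ y, ∀ᶠ u in comap (Subtype.val : S → X) (𝓝 p.1), f u = y := by
  obtain ⟨W, hW, hpre⟩ := (h p p.2).2
  have hW' : Subtype.val ⁻¹' W ∈ comap (Subtype.val : S → X) (𝓝 p.1) := preimage_mem_comap hW
  have := h.comap_neBot p
  obtain ⟨v, hv⟩ := nonempty_of_mem hW'
  exact ⟨f v, mem_of_superset hW' fun u hu => f.isLocallyConstant.apply_eq_of_isPreconnected
    (isPreconnected_preimage_subtypeVal.2 hpre) hu hv⟩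

theorem exists_trace (R : Type*) {Y : Type*} [Semiring R] [AddCommMonoid Y] [Module R Y]
    (h : UnibranchAlong S M) :
    ∃ tr : LocallyConstant S Y →ₗ[R] LocallyConstant M Y, ∀ f (p : M),
      ∀ᶠ u in comap (Subtype.val : S → X) (𝓝 p.1), f u = tr f p := by
  choose c hc using fun f : LocallyConstant S Y => h.exists_eventually_eq f
  have c_unique {f : LocallyConstant S Y} {p : M} {y : Y}
      (hy : ∀ᶠ u in comap (Subtype.val : S → X) (𝓝 p.1), f u = y) : c f p = y := by
    have := h.comap_neBot p
    obtain ⟨u, hu, hu'⟩ := ((hc f p).and hy).exists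
    exact hu.symm.trans hu'
  have c_locallyConstant (f : LocallyConstant S Y) : IsLocallyConstant (c f) := by
    refine (IsLocallyConstant.iff_eventually_eq _).2 fun p => ?_
    have := eventually_eventually_nhds.2 (eventually_comap.1 (hc f p))
    filter_upwards [continuousAt_subtype_val.eventually this] with p' hp'
    exact c_unique (eventually_comap.2 hp')
  refine ⟨⟨⟨fun f => ⟨c f, c_locallyConstant f⟩, fun f g => ?_⟩, fun r f => ?_⟩, hc⟩
  · ext p
    refine c_unique ?_
    filter_upwards [hc f p, hc g p] with u hf hg
    exact congr_arg₂ (· + ·) hf hg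
  · ext p
    refine c_unique ?_
    filter_upwards [hc f p] with u hf
    exact congr_arg (r • ·) hf

end UnibranchAlong

/-- Restriction of locally constant functions to a subset. -/
def restrictLocallyConstant (R : Type*) {Y : Type*} [Semiring R] [AddCommMonoid Y] [Module R Y]
    {S T : Set X} (h : S ⊆ T) : LocallyConstant T Y →ₗ[R] LocallyConstant S Y :=
  LocallyConstant.comapₗ R ⟨Set.inclusion h, continuous_inclusion h⟩

theorem exists_locallyConstant_extension {Y : Type*} {A O : Set X} (hO : IsOpen O)
    (f : LocallyConstant ↥(A ∩ O) Y) (m : LocallyConstant ↥(A \ O) Y)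
    (hfm : ∀ p : ↥(A \ O), ∀ᶠ u in comap (Subtype.val : ↥(A ∩ O) → X) (𝓝 p.1), f u = m p) :
    ∃ F : LocallyConstant A Y, ∀ u : ↥(A ∩ O), F ⟨u, u.2.1⟩ = f u := by
  classical
  let F (a : A) : Y := if ha : a.1 ∈ O then f ⟨a, a.2, ha⟩ else m ⟨a, a.2, ha⟩
  have F_of_mem (u : ↥(A ∩ O)) : F ⟨u, u.2.1⟩ = f u := dif_pos u.2.2
  have F_of_notMem (p : ↥(A \ O)) : F ⟨p, p.2.1⟩ = m p := dif_neg p.2.2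
  have hF : IsLocallyConstant F := by
    refine (IsLocallyConstant.iff_eventually_eq _).2 fun a => ?_
    rw [nhds_subtype, eventually_comap]
    by_cases ha : a.1 ∈ O
    · have f_const := (IsLocallyConstant.iff_eventually_eq _).1 f.isLocallyConstant ⟨a, a.2, ha⟩
      rw [nhds_subtype, eventually_comap] at f_const
      filter_upwards [f_const, hO.mem_nhds ha] with x hx hxO
      rintro b rfl
      exact (F_of_mem ⟨b, b.2, hxO⟩).trans ((hx _ rfl).trans (F_of_mem ⟨a, a.2, ha⟩).symm)
    · have m_const := (IsLocallyConstant.iff_eventually_eq _).1 m.isLocallyConstant ⟨a, a.2, ha⟩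
      rw [nhds_subtype, eventually_comap] at m_const
      filter_upwards [m_const, eventually_comap.1 (hfm ⟨a, a.2, ha⟩)] with x hxm hxf
      rintro b rfl
      rw [F_of_notMem ⟨a, a.2, ha⟩]
      by_cases hb : b.1 ∈ O
      · exact (F_of_mem ⟨b, b.2, hb⟩).trans (hxf _ rfl)
      · exact (F_of_notMem ⟨b, b.2, hb⟩).trans (hxm _ rfl)
  exact ⟨⟨F, hF⟩, F_of_mem⟩

/-- The zeroth Betti number of a set, as the dimension of its space of locally constant functions;
unlike the number of connected components it is suited to Mayer–Vietoris type arguments. -/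
noncomputable def bettiZero (A : Set X) : Cardinal :=
  Module.rank ℚ (LocallyConstant A ℚ)

theorem bettiZero_le_natCard_connectedComponents {A : Set X} [Finite (ConnectedComponents A)] :
    bettiZero A ≤ Nat.card (ConnectedComponents A) := by
  have := Fintype.ofFinite (ConnectedComponents A)
  let L : LocallyConstant A ℚ →ₗ[ℚ] ConnectedComponents A → ℚ :=
    LinearMap.pi fun c => LocallyConstant.evalₗ ℚ c.out
  have hL : Function.Injective L := by
    intro f g hfg
    ext x
    have mem_component : x ∈ connectedComponent (x : ConnectedComponents A).out :=
      ConnectedComponents.coe_eq_coe'.1 (Quot.out_eq _).symm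
    have eq_out (f : LocallyConstant A ℚ) : f x = f (x : ConnectedComponents A).out :=
      f.isLocallyConstant.apply_eq_of_isPreconnected isPreconnected_connectedComponent
        mem_component mem_connectedComponent
    rw [eq_out f, eq_out g]
    exact congr_fun hfg x
  have := LinearMap.lift_rank_le_of_injective L hL
  rw [rank_fun'] at this
  simpa [bettiZero] using this

theorem card_le_bettiZero {A : Set X} {D T : Type*} [Fintype T] {c : A → D}
    (hc : IsLocallyConstant c) (x : T → A) (hx : Function.Injective (c ∘ x)) :
    (Fintype.card T : Cardinal) ≤ bettiZero A := by
  let L : LocallyConstant A ℚ →ₗ[ℚ] T → ℚ := LinearMap.pi fun t => LocallyConstant.evalₗ ℚ (x t)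
  have hL : Function.Surjective L := fun u =>
    ⟨⟨Function.extend (c ∘ x) u 0 ∘ c, hc.comp _⟩, funext fun t => hx.extend_apply u 0 t⟩
  have := L.lift_rank_le_of_surjective hL
  rw [rank_fun'] at this
  simpa [bettiZero] using this

/-- A locally constant function off the wall `A \ (P ∪ N)` extends across the wall exactly when
its traces from the two sides agree. -/
theorem bettiZero_inter_union_le {A P N : Set X} (hP : IsOpen P) (hN : IsOpen N)
    (hAP : UnibranchAlong (A ∩ P) (A \ (P ∪ N))) (hAN : UnibranchAlong (A ∩ N) (A \ (P ∪ N))) :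
    bettiZero (A ∩ (P ∪ N)) ≤ bettiZero A + bettiZero (A \ (P ∪ N)) := by
  obtain ⟨trP, htrP⟩ := hAP.exists_trace ℚ (Y := ℚ)
  obtain ⟨trN, htrN⟩ := hAN.exists_trace ℚ (Y := ℚ)
  let toP := restrictLocallyConstant ℚ (Y := ℚ)
    (Set.inter_subset_inter_right A (Set.subset_union_left (s := P) (t := N)))
  let toN := restrictLocallyConstant ℚ (Y := ℚ)
    (Set.inter_subset_inter_right A (Set.subset_union_right (s := P) (t := N)))
  let res := restrictLocallyConstant ℚ (Y := ℚ) (Set.inter_subset_left (s := A) (t := P ∪ N))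
  let jump := trP ∘ₗ toP - trN ∘ₗ toN
  have ker_le : LinearMap.ker jump ≤ LinearMap.range res := by
    intro f hf
    have traces_eq : trP (toP f) = trN (toN f) := sub_eq_zero.1 hf
    suffices h : ∀ p : ↥(A \ (P ∪ N)),
        ∀ᶠ u in comap (Subtype.val : ↥(A ∩ (P ∪ N)) → X) (𝓝 p.1), f u = trP (toP f) p by
      obtain ⟨F, hF⟩ := exists_locallyConstant_extension (hP.union hN) f _ h
      exact ⟨F, LocallyConstant.ext hF⟩
    intro p
    have nearP := eventually_comap.1 (htrP (toP f) p)
    have nearN := eventually_comap.1 (htrN (toN f) p)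
    refine eventually_comap.2 ?_
    filter_upwards [nearP, nearN] with x hxP hxN
    rintro ⟨_, hA, hxp | hxn⟩ rfl
    · exact hxP ⟨_, hA, hxp⟩ rfl
    · exact (hxN ⟨_, hA, hxn⟩ rfl).trans (by rw [traces_eq])
  unfold bettiZero
  rw [← LinearMap.rank_range_add_rank_ker jump, add_comm]
  gcongr
  · exact (Submodule.rank_mono ker_le).trans (rank_range_le res)
  · exact Submodule.rank_le _

end LocallyConstantFunctions

section Warren

open Filter Topology

variable {E ι : Type*}

/-- The common solution set of the equations `f i = y i` with `i ∈ I`. -/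
def levelSet (f : E → ι → ℝ) (y : ι → ℝ) (I : Finset ι) : Set E :=
  {x | ∀ i ∈ I, f x i = y i}

/-- The complement of the hypersurfaces `f i = y i` with `i ∈ J`. -/
def levelCompl (f : E → ι → ℝ) (y : ι → ℝ) (J : Finset ι) : Set E :=
  {x | ∀ i ∈ J, f x i ≠ y i}

theorem preimage_restrict_singleton (f : E → ι → ℝ) (y : ι → ℝ) (I : Finset ι) :
    (fun x (i : I) => f x i) ⁻¹' {fun i : I => y i} = levelSet f y I := by
  ext x
  simp [levelSet, _root_.funext_iff]

theorem isOpen_levelCompl [TopologicalSpace E] {f : E → ι → ℝ} (hf : Continuous f) (y : ι → ℝ)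
    (J : Finset ι) : IsOpen (levelCompl f y J) := by
  have : levelCompl f y J = ⋂ i ∈ J, {x | f x i ≠ y i} := by ext; simp [levelCompl]
  rw [this]
  exact isOpen_biInter_finset fun i _ =>
    isOpen_ne_fun ((continuous_apply i).comp hf) continuous_const

theorem isLocallyConstant_lt_level [TopologicalSpace E] [Fintype ι] {f : E → ι → ℝ}
    (hf : Continuous f) (y : ι → ℝ) :
    IsLocallyConstant fun (x : levelCompl f y Finset.univ) i => y i < f x i := by
  refine (IsLocallyConstant.iff_eventually_eq _).2 fun x => ?_
  have (i : ι) : ∀ᶠ x' : levelCompl f y Finset.univ in 𝓝 x, (y i < f x' i) = (y i < f x i) := by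
    have hfi : Continuous fun x' : levelCompl f y Finset.univ => f x' i := by fun_prop
    rcases (x.2 i (Finset.mem_univ i)).lt_or_gt with h | h
    · filter_upwards [hfi.continuousAt.eventually_lt_const h] with x' hx'
      exact propext (iff_of_false hx'.not_gt h.not_gt)
    · filter_upwards [hfi.continuousAt.eventually_const_lt h] with x' hx'
      exact propext (iff_of_true hx' h)
  filter_upwards [eventually_all.2 this] with x' hx'
  exact funext hx'

variable [NormedAddCommGroup E] [NormedSpace ℝ E]

/-- The hypersurfaces `f i = y i` are smooth and intersect transversally. -/
def IsRegularLevel (f : E → ι → ℝ) (y : ι → ℝ) : Prop :=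
  ∀ I : Finset ι, ∀ x ∈ levelSet f y I, StrictSubmersionAt (fun w (i : I) => f w i) x

variable [CompleteSpace E] {f : E → ι → ℝ} {y : ι → ℝ}

/-- Near a point of the wall `f j = y j`, the side `f j ∈ s` of `levelSet f y I` is the preimage of
a convex set under the submersion `(f i)`, `i ∈ insert j I`. -/
theorem IsRegularLevel.unibranchAlong [DecidableEq ι] (hy : IsRegularLevel f y) (hf : Continuous f)
    {I : Finset ι} (J : Finset ι) {j : ι} (hj : j ∉ I) {s : Set ℝ} (hs : Convex ℝ s)
    (hys : y j ∈ closure s) :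
    UnibranchAlong (levelSet f y I ∩ levelCompl f y J ∩ {x | f x j ∈ s})
      (levelSet f y (insert j I) ∩ levelCompl f y J) := by
  rintro p ⟨hpI, hpJ⟩
  let F (x : E) (i : ↥(insert j I)) : ℝ := f x i
  let C : Set (↥(insert j I) → ℝ) := Set.univ.pi fun i => if i.1 = j then s else {y i}
  have hC : Convex ℝ C := convex_pi fun i _ => by
    split_ifs
    exacts [hs, convex_singleton _]
  have Fp_mem : F p ∈ closure C := by
    rw [closure_pi_set]
    intro i _
    have Fpi : F p i = y i := hpI i i.2
    rw [Fpi]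
    dsimp only
    split_ifs with hij
    · rwa [hij]
    · exact subset_closure rfl
  have preimage_C : F ⁻¹' C = levelSet f y I ∩ {x | f x j ∈ s} := by
    ext x
    have ne_of_mem (i : ι) (hi : i ∈ I) : i ≠ j := ne_of_mem_of_not_mem hi hj
    simp +contextual [C, F, levelSet, Set.mem_pi, and_comm, ne_of_mem]
  have hO := isOpen_levelCompl hf y J
  rw [Set.inter_right_comm, ← preimage_C]
  have hsub : StrictSubmersionAt F p := hy _ p hpI
  refine ⟨?_, ?_⟩
  · rw [Set.inter_comm]
    exact hO.inter_closure ⟨hpJ, hsub.mem_closure_preimage Fp_mem⟩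
  · obtain ⟨W, hW, hWJ, hWC⟩ := hsub.exists_isPreconnected_inter_preimage (hO.mem_nhds hpJ)
    refine ⟨W, hW, ?_⟩
    rw [Set.inter_assoc, Set.inter_eq_right.2 hWJ, Set.inter_comm]
    exact hWC C hC

theorem IsRegularLevel.bettiZero_inter_levelCompl_insert_le [DecidableEq ι]
    (hy : IsRegularLevel f y) (hf : Continuous f) {I : Finset ι} (J : Finset ι) {j : ι}
    (hj : j ∉ I) :
    bettiZero (levelSet f y I ∩ levelCompl f y (insert j J)) ≤
      bettiZero (levelSet f y I ∩ levelCompl f y J) +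
        bettiZero (levelSet f y (insert j I) ∩ levelCompl f y J) := by
  let above : Set E := {x | f x j ∈ Set.Ioi (y j)}
  let below : Set E := {x | f x j ∈ Set.Iio (y j)}
  have sides : above ∪ below = {x | f x j ≠ y j} := by
    ext x
    change y j < f x j ∨ f x j < y j ↔ f x j ≠ y j
    rw [or_comm, lt_or_lt_iff_ne]
  have off_wall : levelSet f y I ∩ levelCompl f y (insert j J) =
      levelSet f y I ∩ levelCompl f y J ∩ (above ∪ below) := by
    rw [sides]
    ext x
    simp only [levelCompl, Finset.mem_insert, ne_eq, forall_eq_or_imp, Set.mem_inter_iff,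
      Set.mem_ofPred_eq]
    tauto
  have wall : levelSet f y (insert j I) ∩ levelCompl f y J =
      (levelSet f y I ∩ levelCompl f y J) \ (above ∪ below) := by
    rw [sides]
    ext x
    simp only [levelSet, Finset.mem_insert, forall_eq_or_imp, Set.mem_inter_iff,
      Set.mem_ofPred_eq, ne_eq, Set.mem_sdiff, Decidable.not_not]
    tauto
  have hfj : Continuous fun x => f x j := by fun_prop
  rw [off_wall, wall]
  refine bettiZero_inter_union_le (isOpen_Ioi.preimage hfj) (isOpen_Iio.preimage hfj) ?_ ?_
  · rw [← wall]
    exact hy.unibranchAlong hf J hj (convex_Ioi _) (by simp)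
  · rw [← wall]
    exact hy.unibranchAlong hf J hj (convex_Iio _) (by simp)

theorem IsRegularLevel.bettiZero_inter_levelCompl_le [DecidableEq ι] (hy : IsRegularLevel f y)
    (hf : Continuous f) {I J : Finset ι} (hIJ : Disjoint I J) :
    bettiZero (levelSet f y I ∩ levelCompl f y J) ≤
      ∑ K ∈ J.powerset, bettiZero (levelSet f y (I ∪ K)) := by
  induction J using Finset.induction_on generalizing I with
  | empty => simp [levelCompl]
  | insert j J hj ih =>
    obtain ⟨hjI, hIJ⟩ := Finset.disjoint_insert_right.1 hIJ
    rw [Finset.sum_powerset_insert hj]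
    refine (hy.bettiZero_inter_levelCompl_insert_le hf J hjI).trans (add_le_add (ih hIJ) ?_)
    refine (ih (Finset.disjoint_insert_left.2 ⟨hj, hIJ⟩)).trans_eq ?_
    simp only [Finset.insert_union, Finset.union_insert]

/-- Warren's inequality. -/
theorem IsRegularLevel.card_le_sum_bettiZero [Fintype ι] {T : Type*} [Fintype T]
    (hy : IsRegularLevel f y) (hf : Continuous f) (x : T → E) (hxy : ∀ t i, f (x t) i ≠ y i)
    (hx : Function.Injective fun t i => y i < f (x t) i) :
    (Fintype.card T : Cardinal) ≤ ∑ K : Finset ι, bettiZero (levelSet f y K) := by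
  classical
  calc (Fintype.card T : Cardinal)
      ≤ bettiZero (levelCompl f y Finset.univ) :=
        card_le_bettiZero (isLocallyConstant_lt_level hf y) (fun t => ⟨x t, fun i _ => hxy t i⟩) hx
    _ = bettiZero (levelSet f y ∅ ∩ levelCompl f y Finset.univ) := by simp [levelSet]
    _ ≤ ∑ K : Finset ι, bettiZero (levelSet f y K) := by
        simpa using hy.bettiZero_inter_levelCompl_le hf (Finset.disjoint_empty_left Finset.univ)

end Warren

section GenericLevels

open Filter Topology

variable {σ ι : Type*} [Fintype σ] [Finite ι]

theorem exists_isRegularLevel_and_finite_components (P : ι → MvPolynomial σ ℝ) {s : ι → Set ℝ}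
    (hs : ∀ i, (s i).Infinite) :
    ∃ y ∈ Set.univ.pi s, IsRegularLevel (polyMap P) y ∧
      ∀ I, Finite (ConnectedComponents (levelSet (polyMap P : (σ → ℝ) → ι → ℝ) y I)) := by
  classical
  cases nonempty_fintype ι
  choose q hq₀ hq using fun I : Finset ι =>
    exists_ne_zero_forall_regular_and_finite_components fun i : I => P i
  let e (I : Finset ι) : σ ⊕ I → σ ⊕ ι := Sum.map id Subtype.val
  have he (I : Finset ι) : Function.Injective (e I) :=
    Sum.map_injective.2 ⟨Function.injective_id, Subtype.val_injective⟩
  have hQ : ∏ I, rename (e I) (q I) ≠ 0 := Finset.prod_ne_zero_iff.2 fun I _ =>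
    (map_ne_zero_iff _ (rename_injective _ (he I))).2 (hq₀ I)
  obtain ⟨z, hz, hzQ⟩ : ∃ z ∈ Set.univ.pi (Sum.elim (fun _ : σ => Set.univ) s),
      eval z (∏ I, rename (e I) (q I)) ≠ 0 := by
    by_contra! h
    refine hQ (MvPolynomial.funext_set _ ?_ fun z hz => (h z hz).trans (map_zero _).symm)
    rintro (_ | i)
    exacts [Set.infinite_univ, hs i]
  have hI (I : Finset ι) := by
    have hzI : eval z (rename (e I) (q I)) ≠ 0 := by
      rw [map_prod] at hzQ
      exact Finset.prod_ne_zero_iff.1 hzQ I (Finset.mem_univ I)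
    have z_comp_e : z ∘ e I = Sum.elim (z ∘ Sum.inl) fun i : I => z (Sum.inr i) := by
      ext (j | i) <;> rfl
    rw [eval_rename, z_comp_e] at hzI
    exact hq I _ _ hzI
  refine ⟨z ∘ Sum.inr, fun i _ => hz (Sum.inr i) trivial, fun I x hx => ?_, fun I => ?_⟩
  · exact (hI I).1 x (funext fun i => hx i i.2)
  · rw [← preimage_restrict_singleton]
    exact (hI I).2

theorem exists_pos_forall_ne_zero_lt_abs {β : Type*} [Finite β] (f : β → ℝ) :
    ∃ δ > 0, ∀ b, f b ≠ 0 → δ < |f b| := by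
  have h (b : β) : ∀ᶠ δ in 𝓝[>] (0 : ℝ), f b ≠ 0 → δ < |f b| := by
    by_cases hb : f b = 0
    · exact .of_forall fun δ h => absurd hb h
    · filter_upwards [nhdsWithin_le_nhds (eventually_lt_nhds (abs_pos.2 hb))] with δ hδ _ using hδ
  obtain ⟨δ, hδ, hδ₀⟩ := ((eventually_all.2 h).and self_mem_nhdsWithin).exists
  exact ⟨δ, hδ₀, hδ⟩

theorem sign_eq_ite_of_mem_Ioo {δ c d u : ℝ} (hc : c ∈ Set.Ioo (-δ) 0) (hd : d ∈ Set.Ioo 0 δ)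
    (hu : u ≠ 0 → δ < |u|) :
    SignType.sign u = if d < u then 1 else if c < u then 0 else -1 := by
  obtain ⟨hc₁, hc₂⟩ := hc
  obtain ⟨hd₁, hd₂⟩ := hd
  rcases lt_trichotomy u 0 with h | rfl | h
  · have := hu h.ne
    rw [abs_of_neg h] at this
    rw [sign_neg h, if_neg (by linarith), if_neg (by linarith)]
  · rw [sign_zero, if_neg (by linarith), if_pos hc₂]
  · have := hu h.ne'
    rw [abs_of_pos h] at this
    rw [sign_pos h, if_pos (by linarith)]

/-- Perturbing each `P a` by a small negative and a small positive amount makes the level regular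
without losing the signs of the `P a` at the given points. -/
theorem exists_isRegularLevel_determining_signs (P : ι → MvPolynomial σ ℝ) {T : Type*} [Finite T]
    (w : T → σ → ℝ) :
    ∃ y : ι × Bool → ℝ, IsRegularLevel (polyMap (P ∘ Prod.fst)) y ∧
      (∀ I, Finite (ConnectedComponents
        (levelSet (polyMap (P ∘ Prod.fst) : (σ → ℝ) → ι × Bool → ℝ) y I))) ∧
      (∀ i, y (i, false) < y (i, true)) ∧ (∀ t i, polyMap (P ∘ Prod.fst) (w t) i ≠ y i) ∧
      ∀ t i, SignType.sign (eval (w t) (P i)) = if y (i, true) < eval (w t) (P i) then 1 else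
        if y (i, false) < eval (w t) (P i) then 0 else -1 := by
  obtain ⟨δ, hδ₀, hδ⟩ := exists_pos_forall_ne_zero_lt_abs fun b : T × ι => eval (w b.1) (P b.2)
  let s (i : ι × Bool) : Set ℝ := if i.2 then Set.Ioo 0 δ else Set.Ioo (-δ) 0
  have hs (i : ι × Bool) : (s i).Infinite := by
    unfold s
    split_ifs
    exacts [Set.Ioo_infinite hδ₀, Set.Ioo_infinite (neg_lt_zero.2 hδ₀)]
  obtain ⟨y, hys, hreg, hfin⟩ := exists_isRegularLevel_and_finite_components (P ∘ Prod.fst) hs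
  have y_true (i : ι) : y (i, true) ∈ Set.Ioo 0 δ := hys (i, true) trivial
  have y_false (i : ι) : y (i, false) ∈ Set.Ioo (-δ) 0 := by simpa [s] using hys (i, false) trivial
  have y_small (i : ι × Bool) : y i ≠ 0 ∧ |y i| < δ := by
    rcases i with ⟨i, (_ | _)⟩
    · exact ⟨(y_false i).2.ne, abs_lt.2 ⟨(y_false i).1, (y_false i).2.trans hδ₀⟩⟩
    · exact ⟨(y_true i).1.ne', abs_lt.2 ⟨(neg_lt_zero.2 hδ₀).trans (y_true i).1, (y_true i).2⟩⟩
  refine ⟨y, hreg, hfin, fun i => (y_false i).2.trans (y_true i).1, fun t i h => ?_, fun t i => ?_⟩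
  · have h : eval (w t) (P i.1) = y i := by simpa [polyMap, aeval_eq_eval] using h
    exact (hδ (t, i.1) (h ▸ (y_small i).1)).not_gt (h ▸ (y_small i).2)
  · exact sign_eq_ite_of_mem_Ioo (y_false i) (y_true i) (hδ (t, i))

end GenericLevels

section Counting

theorem card_finset_prod_bool_le {α : Type*} [Fintype α] (k : ℕ) (G : Finset (Finset (α × Bool)))
    (hG : ∀ K ∈ G, Set.InjOn Prod.fst (K : Set (α × Bool)) ∧ K.card ≤ k) :
    G.card ≤ 2 ^ k * ∑ r ∈ Finset.range (k + 1), (Fintype.card α).choose r := by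
  classical
  let small : Finset (Finset α) :=
    (Finset.range (k + 1)).biUnion fun r => Finset.univ.powersetCard r
  have mem_small {T : Finset α} : T ∈ small ↔ T.card ≤ k := by
    simp [small, Finset.mem_powersetCard]
  let labelled (p : Σ _ : Finset α, Finset α) : Finset (α × Bool) :=
    p.1.image fun a => (a, decide (a ∈ p.2))
  have G_subset : G ⊆ (small.sigma Finset.powerset).image labelled := by
    intro K hK
    obtain ⟨hinj, hcard⟩ := hG K hK
    let T := K.image Prod.fst
    refine Finset.mem_image.2 ⟨⟨T, T.filter fun a => (a, true) ∈ K⟩, ?_, ?_⟩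
    · simpa [mem_small] using Finset.card_image_le.trans hcard
    · have label {a : α} {b : Bool} (h : (a, b) ∈ K) :
          decide (a ∈ T.filter fun a => (a, true) ∈ K) = b := by
        cases b
        · have : (a, true) ∉ K := fun h' => by simpa using hinj h h' rfl
          simp [this]
        · simp [T, h, Finset.mem_image_of_mem Prod.fst h]
      ext ⟨a, b⟩
      simp only [labelled, T, Finset.mem_image, Prod.mk.injEq]
      constructor
      · rintro ⟨_, ⟨⟨a, b⟩, h, rfl⟩, rfl, rfl⟩
        rwa [label h]
      · intro h
        exact ⟨a, ⟨(a, b), h, rfl⟩, rfl, label h⟩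
  calc G.card ≤ (small.sigma Finset.powerset).card :=
        (Finset.card_le_card G_subset).trans Finset.card_image_le
    _ ≤ small.card * 2 ^ k := by
        rw [Finset.card_sigma]
        refine Finset.sum_le_card_nsmul _ _ _ fun T hT => ?_
        rw [Finset.card_powerset]
        exact Nat.pow_le_pow_right two_pos (mem_small.1 hT)
    _ ≤ 2 ^ k * ∑ r ∈ Finset.range (k + 1), (Fintype.card α).choose r := by
        rw [mul_comm]
        gcongr
        exact Finset.card_biUnion_le.trans (by simp)

theorem StrictSubmersionAt.reindex {E ι κ : Type*} [NormedAddCommGroup E] [NormedSpace ℝ E]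
    [Fintype ι] [Fintype κ] {f : E → ι → ℝ} {x : E} (hf : StrictSubmersionAt f x) (e : κ ≃ ι) :
    StrictSubmersionAt (fun w j => f w (e j)) x := by
  obtain ⟨f', hf', hrange⟩ := hf
  let L := (LinearEquiv.funCongrLeft ℝ ℝ e).toContinuousLinearEquiv
  refine ⟨L.toContinuousLinearMap.comp f', L.hasStrictFDerivAt.comp x hf', ?_⟩
  exact LinearMap.range_eq_top.2 (L.surjective.comp (LinearMap.range_eq_top.1 hrange))

theorem StrictSubmersionAt.finrank_le {E F : Type*} [NormedAddCommGroup E] [NormedSpace ℝ E]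
    [FiniteDimensional ℝ E] [NormedAddCommGroup F] [NormedSpace ℝ F] {f : E → F} {x : E}
    (hf : StrictSubmersionAt f x) : Module.finrank ℝ F ≤ Module.finrank ℝ E :=
  LinearMap.finrank_le_finrank_of_surjective (f := (fderiv ℝ f x).toLinearMap) hf.surjective_fderiv

variable {σ α : Type*} [Fintype σ]

/-- The regular fibres of every map whose coordinates are distinct polynomials of the family `P`,
at most as many as there are variables, have at most `B` connected components. -/
def RegularFiberComponentsLE (P : α → MvPolynomial σ ℝ) (B : ℕ) : Prop :=
  ∀ r ≤ Fintype.card σ, ∀ ι : Fin r → α, Function.Injective ι → ∀ y : Fin r → ℝ,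
    (∀ z, polyMap (P ∘ ι) z = y →
      Function.Surjective (fderiv ℝ (polyMap (P ∘ ι) : (σ → ℝ) → Fin r → ℝ) z)) →
    Nat.card (ConnectedComponents ((polyMap (P ∘ ι) : (σ → ℝ) → Fin r → ℝ) ⁻¹' {y})) ≤ B

variable {P : α → MvPolynomial σ ℝ} {B : ℕ} {y : α × Bool → ℝ}

theorem injOn_fst_of_mem_levelSet {E : Type*} {f : E → α → ℝ}
    (hne : ∀ a, y (a, false) < y (a, true)) {K : Finset (α × Bool)} {x : E}
    (hx : x ∈ levelSet (fun x i => f x i.1) y K) : Set.InjOn Prod.fst (K : Set (α × Bool)) := by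
  rintro ⟨a, b⟩ h ⟨_, b'⟩ h' rfl
  have hy : y (a, b) = y (a, b') := (hx _ h).symm.trans (hx _ h')
  cases b <;> cases b'
  exacts [rfl, absurd hy (hne a).ne, absurd hy (hne a).ne', rfl]

theorem RegularFiberComponentsLE.natCard_levelSet_le (hP : RegularFiberComponentsLE P B)
    (hy : IsRegularLevel (polyMap (P ∘ Prod.fst)) y) {K : Finset (α × Bool)}
    (hinj : Set.InjOn Prod.fst (K : Set (α × Bool))) (hcard : K.card ≤ Fintype.card σ) :
    Nat.card (ConnectedComponents (levelSet (polyMap (P ∘ Prod.fst) : (σ → ℝ) → _) y K)) ≤ B := by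
  let e := K.equivFin.symm
  have mem_levelSet {z : σ → ℝ} : polyMap (P ∘ fun n => (e n).1.1) z = (fun n => y (e n)) ↔
      z ∈ levelSet (polyMap (P ∘ Prod.fst)) y K := by
    rw [_root_.funext_iff, ← preimage_restrict_singleton, Set.mem_preimage, Set.mem_singleton_iff,
      _root_.funext_iff]
    exact e.forall_congr_right (q := fun i : K => polyMap P z i.1.1 = y i)
  have fiber : polyMap (P ∘ fun n => (e n).1.1) ⁻¹' {fun n => y (e n)} =
      levelSet (polyMap (P ∘ Prod.fst) : (σ → ℝ) → _) y K := Set.ext fun _ => mem_levelSet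
  rw [← fiber]
  refine hP K.card hcard _ (hinj.injective.comp e.injective) _ fun z hz => ?_
  exact ((hy K z (mem_levelSet.1 hz)).reindex e).surjective_fderiv

theorem RegularFiberComponentsLE.sum_bettiZero_levelSet_le [Fintype α]
    (hP : RegularFiberComponentsLE P B) (hy : IsRegularLevel (polyMap (P ∘ Prod.fst)) y)
    (hfin : ∀ K, Finite (ConnectedComponents
      (levelSet (polyMap (P ∘ Prod.fst) : (σ → ℝ) → α × Bool → ℝ) y K)))
    (hne : ∀ a, y (a, false) < y (a, true)) :
    ∑ K, bettiZero (levelSet (polyMap (P ∘ Prod.fst) : (σ → ℝ) → α × Bool → ℝ) y K) ≤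
      (B * (2 ^ Fintype.card σ *
        ∑ r ∈ Finset.range (Fintype.card σ + 1), (Fintype.card α).choose r) : ℕ) := by
  classical
  let Z (K : Finset (α × Bool)) : Set (σ → ℝ) := levelSet (polyMap (P ∘ Prod.fst)) y K
  let G := Finset.univ.filter fun K : Finset (α × Bool) =>
    Set.InjOn Prod.fst (K : Set (α × Bool)) ∧ K.card ≤ Fintype.card σ
  have mem_G {K : Finset (α × Bool)} (h : (Z K).Nonempty) : K ∈ G := by
    obtain ⟨x, hx⟩ := h
    refine Finset.mem_filter.2 ⟨Finset.mem_univ K, ?_, ?_⟩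
    · exact injOn_fst_of_mem_levelSet (f := polyMap P) hne hx
    · simpa using (hy K x hx).finrank_le
  have le_B {K : Finset (α × Bool)} (hK : K ∈ G) : bettiZero (Z K) ≤ B := by
    obtain ⟨-, hinj, hcard⟩ := Finset.mem_filter.1 hK
    have := hfin K
    exact bettiZero_le_natCard_connectedComponents.trans
      (Nat.cast_le.2 (hP.natCard_levelSet_le hy hinj hcard))
  have eq_zero {K : Finset (α × Bool)} (hK : K ∉ G) : bettiZero (Z K) = 0 := by
    have : IsEmpty (Z K) := Set.isEmpty_coe_sort.2
      (Set.not_nonempty_iff_eq_empty.1 (mt mem_G hK))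
    have : IsEmpty (ConnectedComponents (Z K)) := ConnectedComponents.isEmpty_iff_isEmpty.2 this
    exact nonpos_iff_eq_zero.1 (bettiZero_le_natCard_connectedComponents.trans (by simp))
  calc ∑ K, bettiZero (Z K) = ∑ K ∈ G, bettiZero (Z K) :=
        (Finset.sum_subset (Finset.subset_univ G) fun K _ hK => eq_zero hK).symm
    _ ≤ ((B * G.card : ℕ) : Cardinal) := by
        simpa [mul_comm] using Finset.sum_le_card_nsmul G _ _ fun K hK => le_B hK
    _ ≤ _ := Nat.cast_le.2 <| Nat.mul_le_mul_left B <|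
        card_finset_prod_bool_le _ G fun K hK => (Finset.mem_filter.1 hK).2

theorem RegularFiberComponentsLE.card_le_of_injective_sign [Fintype α]
    (hP : RegularFiberComponentsLE P B) {T : Type*} [Fintype T] (w : T → σ → ℝ)
    (hw : Function.Injective fun t a => SignType.sign (eval (w t) (P a))) :
    Fintype.card T ≤ B * (2 ^ Fintype.card σ *
      ∑ r ∈ Finset.range (Fintype.card σ + 1), (Fintype.card α).choose r) := by
  obtain ⟨y, hy, hfin, hne, hwy, sign_eq⟩ := exists_isRegularLevel_determining_signs P w
  have injective_lt : Function.Injective fun t i => y i < polyMap (P ∘ Prod.fst) (w t) i := by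
    intro t t' h
    have lt_iff (i : α × Bool) : y i < eval (w t) (P i.1) ↔ y i < eval (w t') (P i.1) :=
      iff_of_eq (congrFun h i)
    refine hw (funext fun a => ?_)
    simp only [sign_eq, lt_iff (a, true), lt_iff (a, false)]
  exact_mod_cast (hy.card_le_sum_bettiZero (continuous_polyMap _) w hwy injective_lt).trans
    (hP.sum_bettiZero_levelSet_le hy hfin hne)

end Counting

section Numerics

open Real

theorem sum_range_choose_le {m k : ℕ} (hk : k ≠ 0) (hkm : k ≤ m) :
    (∑ r ∈ Finset.range (k + 1), (m.choose r : ℝ)) ≤ (exp 1 * m / k) ^ k := by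
  have hk₀ : (0 : ℝ) < k := by positivity
  have hm₀ : (0 : ℝ) < m := hk₀.trans_le (by exact_mod_cast hkm)
  let x : ℝ := k / m
  have hx₀ : 0 < x := by positivity
  have hx₁ : x ≤ 1 := (div_le_one hm₀).2 (by exact_mod_cast hkm)
  have exp_one_div : exp 1 * m / k = exp 1 / x := by
    simp only [x]
    field_simp
  rw [exp_one_div, div_pow, le_div_iff₀ (by positivity)]
  calc (∑ r ∈ Finset.range (k + 1), (m.choose r : ℝ)) * x ^ k
      ≤ ∑ r ∈ Finset.range (k + 1), x ^ r * m.choose r := by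
        rw [Finset.sum_mul]
        refine Finset.sum_le_sum fun r hr => ?_
        rw [mul_comm]
        gcongr ?_ * _
        exact pow_le_pow_of_le_one hx₀.le hx₁ (Finset.mem_range_succ_iff.1 hr)
    _ ≤ ∑ r ∈ Finset.range (m + 1), x ^ r * m.choose r :=
        Finset.sum_le_sum_of_subset_of_nonneg (Finset.range_mono (by gcongr))
          fun _ _ _ => by positivity
    _ = (x + 1) ^ m := by simp [add_pow]
    _ ≤ exp x ^ m := by gcongr; exact add_one_le_exp x
    _ = exp 1 ^ k := by
        rw [← exp_nat_mul, ← exp_nat_mul]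
        congr 1
        simp only [x]
        field_simp

theorem two_le_logb_two_mul_exp_one_mul {s : ℝ} (hs : 1 ≤ s) : 2 ≤ logb 2 (2 * exp 1 * s) := by
  rw [le_logb_iff_rpow_le one_lt_two (by positivity)]
  have := add_one_le_exp (1 : ℝ)
  norm_num
  nlinarith

theorem logb_two_le_half {t : ℝ} (ht : 4 ≤ t) : logb 2 t ≤ t / 2 := by
  rw [logb, div_le_iff₀ (log_pos one_lt_two)]
  have log_t : log t = 2 * log 2 + log (t / 4) := by
    rw [log_div (by positivity) four_ne_zero, show (4 : ℝ) = 2 ^ 2 by norm_num, log_pow]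
    push_cast
    ring
  have log_le : log (t / 4) ≤ t / 4 - 1 := log_le_sub_one_of_pos (by positivity)
  nlinarith [log_two_gt_d9]

theorem le_of_two_pow_le_mul_sum_choose {s k v B : ℕ} (hs : s ≠ 0) (hk : k ≠ 0) (hv : 4 * k ≤ v)
    (h : 2 ^ v ≤ B * (2 ^ k * ∑ r ∈ Finset.range (k + 1), (s * v).choose r)) :
    (v : ℝ) ≤ 2 * logb 2 B + 2 * k * logb 2 (2 * exp 1 * s) := by
  have hv₀ : v ≠ 0 := by lia
  have hB₀ : B ≠ 0 := by rintro rfl; simp at h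
  have four_le : (4 : ℝ) ≤ v / k := by
    rw [le_div_iff₀ (by positivity)]
    exact_mod_cast hv
  have two_pow_le : (2 : ℝ) ^ v ≤ B * (2 * exp 1 * s * (v / k)) ^ k :=
    calc (2 : ℝ) ^ v ≤ B * (2 ^ k * ∑ r ∈ Finset.range (k + 1), ((s * v).choose r : ℝ)) := by
          exact_mod_cast h
      _ ≤ B * (2 ^ k * (exp 1 * (s * v : ℕ) / k) ^ k) := by
          gcongr
          exact sum_range_choose_le hk (by nlinarith [Nat.pos_of_ne_zero hs])
      _ = B * (2 * exp 1 * s * (v / k)) ^ k := by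
          rw [← mul_pow]
          push_cast
          ring
  have v_le : (v : ℝ) ≤ logb 2 B + k * (logb 2 (2 * exp 1 * s) + logb 2 (v / k)) := by
    have := logb_le_logb_of_le one_lt_two (by positivity) two_pow_le
    rwa [logb_mul (by positivity) (by positivity), logb_pow, logb_pow,
      logb_mul (by positivity) (by positivity), logb_self_eq_one one_lt_two, mul_one] at this
  have : k * logb 2 (v / k) ≤ (v : ℝ) / 2 :=
    calc k * logb 2 (v / k) ≤ k * ((v / k : ℝ) / 2) := by gcongr; exact logb_two_le_half four_le
      _ = v / 2 := by field_simp
  linarith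

end Numerics

section Shattering

variable {σ X β : Type*} {φ : (σ → ℝ) → X → Prop} {S : Finset X}

theorem eq_empty_of_shattered (hφ : ∀ w w' x, φ w x → φ w' x)
    (hS : ∀ T ⊆ S, ∃ w, (S : Set X) ∩ {x | φ w x} = T) : S = ∅ := by
  obtain ⟨w, hw⟩ := hS ∅ (Finset.empty_subset S)
  obtain ⟨w', hw'⟩ := hS S subset_rfl
  refine Finset.eq_empty_of_forall_notMem fun x hx => ?_
  have hx' : φ w' x := (hw'.ge hx).2
  simpa using hw.le ⟨hx, hφ w' w x hx'⟩

theorem two_pow_card_le_of_shattered [Fintype σ] [Fintype β] {τ : β → X → MvPolynomial σ ℝ}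
    (hφ : ∀ w w' x, (∀ j, SignType.sign (eval w (τ j x)) = SignType.sign (eval w' (τ j x))) →
      (φ w x → φ w' x))
    (hS : ∀ T ⊆ S, ∃ w, (S : Set X) ∩ {x | φ w x} = T) {κ : Type*} [Fintype κ] {x : κ → X}
    (hx : ∀ p ∈ S, ∃ i, x i = p) {B : ℕ}
    (hB : RegularFiberComponentsLE (fun a : β × κ => τ a.1 (x a.2)) B) :
    2 ^ S.card ≤ B * (2 ^ Fintype.card σ *
      ∑ r ∈ Finset.range (Fintype.card σ + 1), (Fintype.card β * Fintype.card κ).choose r) := by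
  choose w hw using fun T : S.powerset => hS T (Finset.mem_powerset.1 T.2)
  have trace_le {T T' : S.powerset} (h : ∀ a : β × κ, SignType.sign (eval (w T) (τ a.1 (x a.2))) =
      SignType.sign (eval (w T') (τ a.1 (x a.2)))) : (T : Set X) ⊆ T' := by
    rw [← hw, ← hw]
    rintro p ⟨hp, hpT⟩
    obtain ⟨i, rfl⟩ := hx p hp
    exact ⟨hp, hφ _ _ _ (fun j => h (j, i)) hpT⟩
  simpa using hB.card_le_of_injective_sign w fun T T' h =>
    Subtype.ext <| Finset.coe_injective <|
      (trace_le (congrFun h)).antisymm (trace_le (congrFun h.symm))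

end Shattering

theorem vc_bound_from_component_bound_general {σ β X : Type*} [Fintype σ] [Fintype β]
    (τ : β → X → MvPolynomial σ ℝ) (φ : (σ → ℝ) → X → Prop)
    (hφ : ∀ w w' x, (∀ j, SignType.sign (eval w (τ j x)) = SignType.sign (eval w' (τ j x))) →
      (φ w x → φ w' x))
    {B : ℕ} (hB : 1 ≤ B)
    (hcomp : ∀ v, 1 ≤ v → Fintype.card σ ≤ Fintype.card β * v → ∀ x : Fin v → X,
      RegularFiberComponentsLE (fun a : β × Fin v => τ a.1 (x a.2)) B)
    (S : Finset X) (hS : ∀ T ⊆ S, ∃ w, (S : Set X) ∩ {x | φ w x} = T) :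
    (S.card : ℝ) ≤ 2 * Real.logb 2 B +
      2 * Fintype.card σ * Real.logb 2 (2 * Real.exp 1 * Fintype.card β) := by
  have logB_nonneg : 0 ≤ Real.logb 2 B := Real.logb_nonneg one_lt_two (by exact_mod_cast hB)
  rcases isEmpty_or_nonempty β with hβ | hβ
  · have := eq_empty_of_shattered (fun w w' x => hφ w w' x hβ.elim) hS
    simpa [this] using logB_nonneg
  rcases isEmpty_or_nonempty σ with hσ | hσ
  · have := eq_empty_of_shattered (fun w w' x => hφ w w' x fun j => by rw [Subsingleton.elim w]) hS
    simpa [this] using logB_nonneg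
  have hβ₁ : 1 ≤ Fintype.card β := Fintype.card_pos
  have hσ₁ : 1 ≤ Fintype.card σ := Fintype.card_pos
  rcases lt_or_ge S.card (4 * Fintype.card σ) with hcard | hcard
  · have two_le := two_le_logb_two_mul_exp_one_mul (s := Fintype.card β) (by exact_mod_cast hβ₁)
    have hcard : (S.card : ℝ) < 4 * Fintype.card σ := by exact_mod_cast hcard
    nlinarith
  · refine le_of_two_pow_le_mul_sum_choose (by lia) (by lia) hcard ?_
    let x (i : Fin S.card) : X := S.equivFin.symm i
    have hx (p : X) (hp : p ∈ S) : ∃ i, x i = p := ⟨S.equivFin ⟨p, hp⟩, by simp [x]⟩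
    simpa using two_pow_card_le_of_shattered hφ hS hx (hcomp S.card (by lia) (by nlinarith) x)

theorem eval_bind₁_sumElim {R σ κ : Type*} [CommSemiring R] (w : σ → R) (x : κ → R)
    (p : MvPolynomial (σ ⊕ κ) R) :
    eval w (bind₁ (Sum.elim X (C ∘ x)) p) = eval (Sum.elim w x) p := by
  rw [← aeval_eq_eval, aeval_bind₁, ← aeval_eq_eval]
  congr 1
  ext (i | i) <;> simp

/-- Karpinski–Macintyre-style VC bound: `φ(w,x)` is a fixed Boolean
combination (encoded by `g : (Fin s → Prop) → Prop` and the choice `sign` of atom type)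
of `s` atomic predicates `τ_j(w,x) = 0` or `τ_j(w,x) > 0`.  If `B ≥ 1` bounds the number
of connected components of `f⁻¹(y)` for every map `f = (θ₁,…,θ_r)` built from `r ≤ k` of
the `s·v` polynomials `τ_j(·,xᵢ)` (for any `v ≥ 1` with `s·v ≥ k`, any points
`x₁,…,x_v ∈ ℝ^N`) and every regular value `y`, then every finite subset of `ℝ^N`
shattered by `𝓐 = {A_w}` has cardinality at most `2·lg B + 2k·lg(2es)`. -/
theorem vc_bound_from_component_bound
    (s k N : ℕ)
    (τ : Fin s → MvPolynomial (Fin k ⊕ Fin N) ℝ)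
    (sign : Fin s → Bool)
    (g : (Fin s → Prop) → Prop)
    (φ : (Fin k → ℝ) → (Fin N → ℝ) → Prop)
    (hφ : ∀ w x, φ w x ↔ g (fun j =>
      if sign j then MvPolynomial.eval (Sum.elim w x) (τ j) = 0
      else 0 < MvPolynomial.eval (Sum.elim w x) (τ j)))
    (B : ℕ) (hB : 1 ≤ B)
    (hcomp : ∀ v : ℕ, 1 ≤ v → k ≤ s * v →
      ∀ x : Fin v → (Fin N → ℝ), ∀ r : ℕ, r ≤ k →
      ∀ ι : Fin r → Fin s × Fin v, Function.Injective ι →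
      ∀ f : (Fin k → ℝ) → (Fin r → ℝ),
        (∀ w j, f w j = MvPolynomial.eval (Sum.elim w (x (ι j).2)) (τ (ι j).1)) →
      ∀ y : Fin r → ℝ, (∀ z ∈ f ⁻¹' {y}, Function.Surjective (fderiv ℝ f z)) →
        Nat.card (ConnectedComponents ↥(f ⁻¹' {y})) ≤ B) :
    ∀ S : Finset (Fin N → ℝ),
      (∀ T ⊆ S, ∃ w : Fin k → ℝ, (↑S : Set (Fin N → ℝ)) ∩ {x | φ w x} = ↑T) →
      (S.card : ℝ) ≤ 2 * Real.logb 2 B + 2 * k * Real.logb 2 (2 * Real.exp 1 * s) := by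
  let τ' (j : Fin s) (x : Fin N → ℝ) : MvPolynomial (Fin k) ℝ :=
    bind₁ (Sum.elim X (C ∘ x)) (τ j)
  have eval_τ' (w : Fin k → ℝ) (j : Fin s) (x : Fin N → ℝ) :
      eval w (τ' j x) = eval (Sum.elim w x) (τ j) := eval_bind₁_sumElim w x (τ j)
  have hφ' (w w' : Fin k → ℝ) (x : Fin N → ℝ)
      (h : ∀ j, SignType.sign (eval w (τ' j x)) = SignType.sign (eval w' (τ' j x))) :
      φ w x → φ w' x := by
    have eq_zero_iff (j : Fin s) := by simpa [sign_eq_zero_iff] using congrArg (· = 0) (h j)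
    have pos_iff (j : Fin s) := by simpa [sign_eq_one_iff] using congrArg (· = 1) (h j)
    simp only [eval_τ'] at eq_zero_iff pos_iff
    simp only [hφ, eq_zero_iff, pos_iff, imp_self]
  have hcomp' (v : ℕ) (hv : 1 ≤ v) (hk : Fintype.card (Fin k) ≤ Fintype.card (Fin s) * v)
      (x : Fin v → Fin N → ℝ) :
      RegularFiberComponentsLE (fun a : Fin s × Fin v => τ' a.1 (x a.2)) B := by
    rw [Fintype.card_fin, Fintype.card_fin] at hk
    intro r hr ι hι y hy
    exact hcomp v hv hk x r (by simpa using hr) ι hι _ (fun w j => eval_τ' w _ _) y hy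
  simpa using vc_bound_from_component_bound_general τ' φ hφ' hB hcomp'
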